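/- arXiv:math/0701614 — 2 statements merged into one kernel-verified Lean document; each statement's English description precedes it below -/
import Mathlib

section
/- Let k be a field of characteristic different from 2, let a, b ∈ k be nonzero, and suppose the polynomial Y² − (aX⁴ + b) is irreducible in k[X][Y] (equivalently, aX⁴ + b is not a square in k(X)), so that the quotient ring R = k[X, Y]/(Y² − aX⁴ − b) is an integral domain. Let K be the fraction field of R (the function field of the genus one hyperelliptic curve y² = ax⁴ + b). Then the quaternion algebra (a, b)_K over K (with basis 1, i, j, ij and relations i² = a, j² = b, ij = −ji) is split: it is isomorphic as a K-algebra to the 2×2 matrix algebra Mat₂(K). -/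
set_option maxHeartbeats 1000000
set_option synthInstance.maxHeartbeats 400000

open Polynomial
open scoped Quaternion

/-- If `b = y² - a u²`, then `(a, b)` is split. -/
theorem quaternion_split_aux {K : Type} [Field K] (a b u y : K) (h2 : (2 : K) ≠ 0)
    (ha : a ≠ 0) (hb : b ≠ 0) (h : y ^ 2 = a * u ^ 2 + b) :
    Nonempty (ℍ[K, a, b] ≃ₐ[K] Matrix (Fin 2) (Fin 2) K) := by
  let q : QuaternionAlgebra.Basis (Matrix (Fin 2) (Fin 2) K) a 0 b :=
    { i := !![0, a; 1, 0]
      j := !![y, -(a * u); u, -y]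
      k := !![a * u, -(a * y); y, -(a * u)]
      i_mul_i := by
        ext i j; fin_cases i <;> fin_cases j <;> simp [Matrix.mul_apply, Fin.sum_univ_two]
      j_mul_j := by
        ext i j
        fin_cases i <;> fin_cases j <;> simp [Matrix.mul_apply, Fin.sum_univ_two] <;>
          first | ring1 | linear_combination h
      i_mul_j := by
        ext i j; fin_cases i <;> fin_cases j <;> simp [Matrix.mul_apply, Fin.sum_univ_two]
      j_mul_i := by
        ext i j
        fin_cases i <;> fin_cases j <;> simp [Matrix.mul_apply, Fin.sum_univ_two] <;> ring }
  have hq : ∀ x : ℍ[K, a, b], q.liftHom x =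
      !![x.re + x.imJ * y + x.imK * (a * u), x.imI * a - x.imJ * (a * u) - x.imK * (a * y);
        x.imI + x.imJ * u + x.imK * y, x.re - x.imJ * y - x.imK * (a * u)] := by
    intro x
    change q.lift x = _
    ext i j
    fin_cases i <;> fin_cases j <;>
      simp [QuaternionAlgebra.Basis.lift, q, Matrix.algebraMap_matrix_apply] <;> ring
  refine ⟨AlgEquiv.ofBijective q.liftHom ⟨?_, ?_⟩⟩
  · rw [injective_iff_map_eq_zero]
    intro x hx
    rw [hq] at hx
    have h00 := congrFun (congrFun hx 0) 0
    have h01 := congrFun (congrFun hx 0) 1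
    have h10 := congrFun (congrFun hx 1) 0
    have h11 := congrFun (congrFun hx 1) 1
    simp at h00 h01 h10 h11
    have hA : x.imJ * y + x.imK * (a * u) = 0 :=
      (mul_eq_zero.mp (show 2 * (x.imJ * y + x.imK * (a * u)) = 0 by
        linear_combination h00 - h11)).resolve_left h2
    have hB : x.imJ * u + x.imK * y = 0 :=
      (mul_eq_zero.mp (show (2 * a) * (x.imJ * u + x.imK * y) = 0 by
        linear_combination a * h10 - h01)).resolve_left (mul_ne_zero h2 ha)
    ext
    · simp; linear_combination h00 - hA
    · simp; linear_combination h10 - hB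
    · exact (mul_eq_zero.mp (show b * x.imJ = 0 by
        linear_combination y * hA - a * u * hB - x.imJ * h)).resolve_left hb
    · exact (mul_eq_zero.mp (show b * x.imK = 0 by
        linear_combination y * hB - u * hA - x.imK * h)).resolve_left hb
  · intro M
    refine ⟨⟨(M 0 0 + M 1 1) / 2, (M 0 1 / a + M 1 0) / 2,
      (y * ((M 0 0 - M 1 1) / 2) - a * u * ((M 1 0 - M 0 1 / a) / 2)) / b,
      (y * ((M 1 0 - M 0 1 / a) / 2) - u * ((M 0 0 - M 1 1) / 2)) / b⟩, ?_⟩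
    rw [hq]
    obtain rfl : b = y ^ 2 - a * u ^ 2 := by linear_combination -h
    ext i j
    fin_cases i <;> fin_cases j <;> simp <;> field_simp <;> ring

/-- (Section 5.2.1, following Han.) Let `k` be a field with `char k ≠ 2`, let `a, b ∈ k` be
nonzero, and suppose `Y² - (aX⁴ + b)` is irreducible in `k[X][Y]`, so that the coordinate ring
`R = k[X,Y]/(Y² - aX⁴ - b)` is a domain. Let `K` be the fraction field of `R` (the function
field of the genus one curve `y² = ax⁴ + b`). Then the quaternion algebra `(a, b)_K` is split:
it is isomorphic as a `K`-algebra to `Mat₂(K)`. -/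
theorem quaternion_split_over_hyperelliptic_functionField (k : Type) [Field k]
    (hchar : ringChar k ≠ 2) (a b : k) (ha : a ≠ 0) (hb : b ≠ 0)
    (hirr : Irreducible (X ^ 2 - C (C a * X ^ 4 + C b) : Polynomial (Polynomial k)))
    (R : Type) [CommRing R] [Algebra k R]
    (e : R ≃ₐ[k] (Polynomial (Polynomial k) ⧸
      Ideal.span {(X ^ 2 - C (C a * X ^ 4 + C b) : Polynomial (Polynomial k))}))
    (K : Type) [Field K] [Algebra R K] [IsFractionRing R K] :
    Nonempty (ℍ[K, algebraMap R K (algebraMap k R a), algebraMap R K (algebraMap k R b)]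
      ≃ₐ[K] Matrix (Fin 2) (Fin 2) K) := by
  let I : Ideal (Polynomial (Polynomial k)) :=
    Ideal.span {(X ^ 2 - C (C a * X ^ 4 + C b) : Polynomial (Polynomial k))}
  let φ : k →+* K := (algebraMap R K).comp (algebraMap k R)
  let ψ : Polynomial (Polynomial k) →+* K :=
    (algebraMap R K).comp (e.symm.toRingEquiv.toRingHom.comp (Ideal.Quotient.mk I))
  have hψ : ∀ c : k, ψ (C (C c)) = φ c := by
    intro c
    exact congrArg (algebraMap R K) (e.symm.commutes c)
  have h0 : ψ (X ^ 2 - C (C a * X ^ 4 + C b)) = 0 := by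
    have : Ideal.Quotient.mk I (X ^ 2 - C (C a * X ^ 4 + C b)) = 0 :=
      Ideal.Quotient.eq_zero_iff_mem.mpr (Ideal.mem_span_singleton_self _)
    simp only [ψ, RingHom.comp_apply, this, map_zero]
  have h2 : (2 : k) ≠ 0 := Ring.two_ne_zero hchar
  apply quaternion_split_aux _ _ (ψ (C X) ^ 2) (ψ X)
  · have := (map_ne_zero φ).mpr h2
    rwa [map_ofNat] at this
  · exact (map_ne_zero φ).mpr ha
  · exact (map_ne_zero φ).mpr hb
  · change _ = φ a * _ + φ b
    rw [← hψ, ← hψ]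
    simp only [map_sub, map_pow, map_add, map_mul] at h0
    linear_combination h0
end

section
/- Let L be a field and let (L_i)_{i ∈ I} be a directed family of subfields of L (for any i, j there is m with L_i ⊆ L_m and L_j ⊆ L_m) whose union is all of L. Fix an index i₀ and let A be a finite-dimensional central simple algebra over F = L_{i₀}. If the base change A ⊗_F L is isomorphic as an L-algebra to a matrix algebra Mat_d(L), then there exists an index j with F ⊆ L_j such that A ⊗_F L_j is isomorphic as an L_j-algebra to the matrix algebra Mat_d(L_j). -/
open scoped TensorProduct

theorem csa_descend_aux {F K L A : Type} [Field F] [Field K] [Field L] [Algebra F K] [Algebra K L]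
    [Algebra F L] [IsScalarTower F K L] [Ring A] [Algebra F A] [FiniteDimensional F A] (d : ℕ)
    (φ : (L ⊗[F] A) ≃ₐ[L] Matrix (Fin d) (Fin d) L)
    (hφ : ∀ a i j, φ (1 ⊗ₜ a) i j ∈ Set.range (algebraMap K L)) :
    Nonempty ((K ⊗[F] A) ≃ₐ[K] Matrix (Fin d) (Fin d) K) := by
  let ι : Matrix (Fin d) (Fin d) K →ₐ[F] Matrix (Fin d) (Fin d) L :=
    (IsScalarTower.toAlgHom F K L).mapMatrix
  have hιapp : ∀ M i j, ι M i j = algebraMap K L (M i j) := fun M i j => rfl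
  have hι : Function.Injective ι := by
    intro M N h
    ext i j
    apply (algebraMap K L).injective
    rw [← hιapp, ← hιapp, h]
  let f : A →ₐ[F] Matrix (Fin d) (Fin d) L :=
    (φ.toAlgHom.restrictScalars F).comp Algebra.TensorProduct.includeRight
  have hf : ∀ a, f a = φ (1 ⊗ₜ a) := fun a => rfl
  have hr : ∀ a, f a ∈ ι.range := by
    intro a
    choose M hM using hφ a
    refine ⟨Matrix.of M, ?_⟩
    ext i j
    exact hM i j
  let g : A →ₐ[F] Matrix (Fin d) (Fin d) K :=
    (AlgEquiv.ofInjective ι hι).symm.toAlgHom.comp (f.codRestrict ι.range hr)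
  have hg : ∀ a, ι (g a) = f a := by
    intro a
    have := (AlgEquiv.ofInjective ι hι).apply_symm_apply (f.codRestrict ι.range hr a)
    exact congrArg Subtype.val this
  let G : (K ⊗[F] A) →ₐ[K] Matrix (Fin d) (Fin d) K :=
    Algebra.TensorProduct.lift (Algebra.ofId K _) g (fun x y => Algebra.commutes x (g y))
  have hG : ∀ k a, G (k ⊗ₜ a) = k • g a := by
    intro k a
    rw [Algebra.smul_def]
    exact Algebra.TensorProduct.lift_tmul _ _ _ k a
  let T : (K ⊗[F] A) →ₗ[F] (L ⊗[F] A) :=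
    LinearMap.rTensor A (IsScalarTower.toAlgHom F K L).toLinearMap
  have hT : Function.Injective T :=
    Module.Flat.rTensor_preserves_injective_linearMap _ (algebraMap K L).injective
  have hcomp : ∀ x, ι (G x) = φ (T x) := by
    intro x
    induction x with
    | zero => simp
    | add x y hx hy => simp only [map_add, hx, hy]
    | tmul k a =>
      have h1 : T (k ⊗ₜ a) = (algebraMap K L k) • ((1 : L) ⊗ₜ[F] a) := by
        rw [TensorProduct.smul_tmul', smul_eq_mul, mul_one]
        rfl
      rw [h1, map_smul, hG, ← hf, ← hg]
      ext i j
      simp [hιapp]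
  have hinj : Function.Injective G := by
    intro x y h
    apply hT
    apply φ.injective
    rw [← hcomp, ← hcomp, h]
  have hdim : Module.finrank K (K ⊗[F] A) = Module.finrank K (Matrix (Fin d) (Fin d) K) := by
    have := φ.toLinearEquiv.finrank_eq
    rw [Module.finrank_baseChange, Module.finrank_matrix] at this
    rw [Module.finrank_baseChange, Module.finrank_matrix, this]
    simp
  have hsurj : Function.Surjective G.toLinearMap :=
    (LinearMap.injective_iff_surjective_of_finrank_eq_finrank hdim).1 hinj
  exact ⟨AlgEquiv.ofBijective G ⟨hinj, hsurj⟩⟩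

/-- (Key claim in the proof of Theorem 4.9.) Let `L` be a field that is the directed union of a
family of subfields `(Lᵢ)`, and let `A` be a finite-dimensional central simple algebra over
`F = L_{i₀}`. If `A ⊗_F L` is isomorphic to `Mat_d(L)`, then there is an index `j` with
`F ⊆ L_j` such that `A ⊗_F L_j` is already isomorphic to `Mat_d(L_j)`. -/
theorem csa_split_at_finite_stage (L : Type) [Field L] (I : Type) (Li : I → Subfield L)
    (hdir : ∀ i j, ∃ m, Li i ≤ Li m ∧ Li j ≤ Li m)
    (hunion : ∀ x : L, ∃ i, x ∈ Li i)
    (i₀ : I) (A : Type) [Ring A] [Algebra (Li i₀) A]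
    [FiniteDimensional (Li i₀) A] [Algebra.IsCentral (Li i₀) A] [IsSimpleRing A]
    (d : ℕ)
    (hsplit : Nonempty ((L ⊗[Li i₀] A) ≃ₐ[L] Matrix (Fin d) (Fin d) L)) :
    ∃ j, ∃ h : Li i₀ ≤ Li j,
      Nonempty (letI := (Subfield.inclusion h).toAlgebra
        ((Li j ⊗[Li i₀] A) ≃ₐ[Li j] Matrix (Fin d) (Fin d) (Li j))) := by
  classical
  obtain ⟨φ⟩ := hsplit
  have hfin : ∀ s : Finset L, ∃ j, Li i₀ ≤ Li j ∧ ∀ x ∈ s, x ∈ Li j := by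
    intro s
    induction s using Finset.induction_on with
    | empty => exact ⟨i₀, le_rfl, by simp⟩
    | insert x s _ ih =>
      obtain ⟨j, hj, hs⟩ := ih
      obtain ⟨i, hi⟩ := hunion x
      obtain ⟨m, h1, h2⟩ := hdir i j
      refine ⟨m, hj.trans h2, ?_⟩
      intro y hy
      rcases Finset.mem_insert.1 hy with rfl | hy
      · exact h1 hi
      · exact h2 (hs y hy)
  let b := Module.finBasis (Li i₀) A
  obtain ⟨j, h, hj⟩ := hfin (Finset.univ.image
    (fun p : Fin (Module.finrank (Li i₀) A) × Fin d × Fin d => φ (1 ⊗ₜ b p.1) p.2.1 p.2.2))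
  have hb : ∀ k p q, φ (1 ⊗ₜ b k) p q ∈ Li j := fun k p q =>
    hj _ (Finset.mem_image.2 ⟨(k, p, q), Finset.mem_univ _, rfl⟩)
  refine ⟨j, h, ?_⟩
  letI := (Subfield.inclusion h).toAlgebra
  haveI : IsScalarTower (Li i₀) (Li j) L := IsScalarTower.of_algebraMap_eq (fun x => rfl)
  refine csa_descend_aux (L := L) d φ ?_
  intro a p q
  have key : φ (1 ⊗ₜ a) p q ∈ Li j := by
    have h1 : ((1 : L) ⊗ₜ[Li i₀] a) = ∑ k, ((b.repr a k : Li i₀) : L) • ((1 : L) ⊗ₜ[Li i₀] b k) := by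
      conv_lhs => rw [← b.sum_repr a]
      rw [TensorProduct.tmul_sum]
      refine Finset.sum_congr rfl fun k _ => ?_
      rw [TensorProduct.tmul_smul]
      rfl
    rw [h1, map_sum, Matrix.sum_apply]
    refine sum_mem fun k _ => ?_
    rw [map_smul, Matrix.smul_apply, smul_eq_mul]
    exact mul_mem (h (b.repr a k).2) (hb k p q)
  exact ⟨⟨_, key⟩, rfl⟩
end
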